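/- Let G be a triconnected 4-planar graph embedded in the plane with a separating triangle T on vertices {A, B, Γ}. Then each of A, B, Γ has degree exactly 4 and is adjacent to exactly one vertex of the subgraph inside T and exactly one vertex of the subgraph outside T; moreover, the three inside neighbors A_in, B_in, Γ_in are either pairwise distinct or all equal to the same vertex, and likewise the three outside neighbors A_out, B_out, Γ_out are either pairwise distinct or all equal to the same vertex. -/

import Mathlib

open Set

universe u

/-- A topological embedding of a simple graph in the plane: vertices are mapped to
distinct points and every edge is realized by a simple arc joining the images of its
endpoints, such that two arcs of distinct edges meet only in common endpoints and no
vertex point lies in the interior of an arc. -/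
structure PlaneEmbedding {V : Type u} (G : SimpleGraph V) where
  pos : V → ℝ × ℝ
  pos_inj : Function.Injective pos
  arc : ∀ ⦃u v : V⦄, G.Adj u v → Set (ℝ × ℝ)
  arc_symm : ∀ ⦃u v : V⦄ (h : G.Adj u v), arc h.symm = arc h
  arc_curve : ∀ ⦃u v : V⦄ (h : G.Adj u v), ∃ f : ℝ → ℝ × ℝ,
    ContinuousOn f (Set.Icc 0 1) ∧ Set.InjOn f (Set.Icc 0 1) ∧
    f 0 = pos u ∧ f 1 = pos v ∧ f '' Set.Icc 0 1 = arc h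
  arc_inter : ∀ ⦃u v w z : V⦄ (h₁ : G.Adj u v) (h₂ : G.Adj w z),
    s(u, v) ≠ s(w, z) → arc h₁ ∩ arc h₂ ⊆ ({pos u, pos v} ∩ {pos w, pos z} : Set (ℝ × ℝ))
  pos_arc : ∀ ⦃u v : V⦄ (h : G.Adj u v) (w : V), pos w ∈ arc h → w = u ∨ w = v

/-- A graph is planar if it admits a topological embedding in the plane. -/
def SimpleGraph.IsPlanar {V : Type u} (G : SimpleGraph V) : Prop :=
  Nonempty (PlaneEmbedding G)

/-- The point set covered by a plane embedding. -/
def PlaneEmbedding.drawing {V : Type u} {G : SimpleGraph V} (E : PlaneEmbedding G) :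
    Set (ℝ × ℝ) :=
  Set.range E.pos ∪ ⋃ (u : V) (v : V) (h : G.Adj u v), E.arc h

/-- A face of a plane embedding is a connected component of the complement of the drawing. -/
def PlaneEmbedding.IsFace {V : Type u} {G : SimpleGraph V} (E : PlaneEmbedding G)
    (F : Set (ℝ × ℝ)) : Prop :=
  ∃ p, p ∉ E.drawing ∧ F = connectedComponentIn E.drawingᶜ p

/-- A vertex is incident to a face if its point lies on the boundary of the face. -/
def PlaneEmbedding.VertexOnFace {V : Type u} {G : SimpleGraph V} (E : PlaneEmbedding G)
    (v : V) (F : Set (ℝ × ℝ)) : Prop :=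
  E.pos v ∈ closure F

/-- Maximum degree at most `d`. -/
def SimpleGraph.MaxDegreeLE {V : Type u} (G : SimpleGraph V) (d : ℕ) : Prop :=
  ∀ v : V, (G.neighborSet v).ncard ≤ d

/-- A graph is triconnected (3-connected) if it has more than three vertices, is
connected, and stays connected after removing any two vertices. -/
def SimpleGraph.IsTriconnected {V : Type u} (G : SimpleGraph V) : Prop :=
  3 < Nat.card V ∧ G.Connected ∧
    ∀ u v : V, (G.induce {w : V | w ≠ u ∧ w ≠ v}).Connected

/-- A graph is biconnected (2-connected) if it has more than two vertices, is
connected, and stays connected after removing any single vertex. -/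
def SimpleGraph.IsBiconnected {V : Type u} (G : SimpleGraph V) : Prop :=
  2 < Nat.card V ∧ G.Connected ∧ ∀ u : V, (G.induce {w : V | w ≠ u}).Connected

/-- A graph is subhamiltonian if it is a spanning subgraph of a planar hamiltonian graph. -/
def SimpleGraph.IsSubhamiltonian {V : Type u} [Fintype V] (G : SimpleGraph V) : Prop :=
  ∃ H : SimpleGraph V, G ≤ H ∧ H.IsPlanar ∧ (letI := Classical.decEq V; H.IsHamiltonian)

/-- The graph consisting of the edges of the cyclic vertex sequence `σ`. -/
def cyclicSuccGraph {W : Type u} (σ : ZMod (Nat.card W) ≃ W) : SimpleGraph W :=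
  SimpleGraph.fromRel fun u v => ∃ i, u = σ i ∧ v = σ (i + 1)

/-- The cyclic ordering `σ` of all vertices of `G` is a subhamiltonian cycle for `G` if
adding the edges between consecutive vertices of `σ` keeps the graph planar. -/
def SimpleGraph.IsSubhamiltonianCycle {W : Type u} (G : SimpleGraph W)
    (σ : ZMod (Nat.card W) ≃ W) : Prop :=
  SimpleGraph.IsPlanar (G ⊔ cyclicSuccGraph σ)

/-- The edges (pairs of consecutive vertices) of the cyclic sequence `σ`. -/
def cycleEdges {W : Type u} (σ : ZMod (Nat.card W) ≃ W) : Set (Sym2 W) :=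
  {e | ∃ i, e = s(σ i, σ (i + 1))}

/-- The subhamiltonian cycle `σ` crosses the face `F` at position `i` if the two
consecutive vertices `σ i` and `σ (i+1)` are both incident to `F` but not adjacent. -/
def CrossesFaceAt {V : Type u} {G : SimpleGraph V} (E : PlaneEmbedding G)
    (σ : ZMod (Nat.card V) ≃ V) (F : Set (ℝ × ℝ)) (i : ZMod (Nat.card V)) : Prop :=
  E.VertexOnFace (σ i) F ∧ E.VertexOnFace (σ (i + 1)) F ∧ ¬ G.Adj (σ i) (σ (i + 1))

/-- A separating triangle: a triangle whose removal disconnects the graph. -/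
def SimpleGraph.IsSepTriangle {V : Type u} (G : SimpleGraph V) (a b c : V) : Prop :=
  G.Adj a b ∧ G.Adj b c ∧ G.Adj a c ∧
    ¬ (G.induce {v : V | v ≠ a ∧ v ≠ b ∧ v ≠ c}).Connected

section Triangle

variable {V : Type u} {G : SimpleGraph V} (E : PlaneEmbedding G) {a b c : V}

/-- The Jordan curve formed by the drawing of the triangle `a b c`. -/
def triangleDrawing (hab : G.Adj a b) (hbc : G.Adj b c) (hac : G.Adj a c) :
    Set (ℝ × ℝ) :=
  E.arc hab ∪ E.arc hbc ∪ E.arc hac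

/-- The vertices strictly inside the triangle `a b c` (bounded side of the Jordan curve). -/
def insideTriangle (hab : G.Adj a b) (hbc : G.Adj b c) (hac : G.Adj a c) : Set V :=
  {v | v ≠ a ∧ v ≠ b ∧ v ≠ c ∧
    Bornology.IsBounded
      (connectedComponentIn (triangleDrawing E hab hbc hac)ᶜ (E.pos v))}

/-- The vertices strictly outside the triangle `a b c` (unbounded side of the Jordan curve). -/
def outsideTriangle (hab : G.Adj a b) (hbc : G.Adj b c) (hac : G.Adj a c) : Set V :=
  {v | v ≠ a ∧ v ≠ b ∧ v ≠ c ∧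
    ¬ Bornology.IsBounded
      (connectedComponentIn (triangleDrawing E hab hbc hac)ᶜ (E.pos v))}

end Triangle

/-! Removing the triangle leaves at least two components, which we call fragments. By
triconnectivity each fragment sends an edge to every vertex of the triangle, so the degree bound
forces exactly one such edge for each of two fragments. If these two fragments lay in the same
region of the plane cut along the triangle, contracting them would give a plane drawing of `K₅`;
if there were a third region, a point in it could be joined to the three triangle vertices, giving
a plane drawing of `K₃,₃`. Hence there are two regions, one bounded and one not, and each contains
one of the two fragments; this avoids the Jordan curve theorem. Both drawings are excluded by the
argument of van Kampen: the winding numbers of the edges about the vertices show that chords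
between points in convex position, drawn for the same graph, would have an even number of
crossings of disjoint edges. Finally, if two triangle vertices share their neighbour `x` on one
side, then `x` and the third vertex would separate the rest of that side, unless the third vertex
is attached at `x` too. -/

/-! ### Continuous logarithms -/

section ContinuousLogs

variable {X : Type*} [TopologicalSpace X]

theorem exists_continuous_log [SimplyConnectedSpace X] [LocallyPathConnectedSpace X] {F : X → ℂ}
    (hF : Continuous F) (hF0 : ∀ z, F z ≠ 0) :
    ∃ g : X → ℂ, Continuous g ∧ ∀ z, Complex.exp (g z) = F z := by
  have huniv : IsSimplyConnected (univ : Set X) :=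
    (Homeomorph.Set.univ X).toHomotopyEquiv.simplyConnectedSpace
  obtain ⟨g, hg, hexp⟩ := Complex.exists_continuousOn_eqOn_exp_comp huniv isOpen_univ
    hF.continuousOn (by rintro ⟨z, -, hz⟩; exact hF0 z hz)
  exact ⟨g, continuousOn_univ.1 hg, fun z => hexp (mem_univ z)⟩

theorem log_sub_eq_of_exp_eq [PreconnectedSpace X] {f g : X → ℂ} (hf : Continuous f)
    (hg : Continuous g) (h : ∀ x, Complex.exp (f x) = Complex.exp (g x)) (x y : X) :
    f x - f y = g x - g y := by
  have hfg : f = fun z => g z + (f y - g y) :=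
    Complex.isCoveringMap_exp.eq_of_comp_eq hf (by fun_prop) (funext fun z => Subtype.ext (by
      simp [Complex.exp_add, Complex.exp_sub, h, Complex.exp_ne_zero])) y (by simp)
  rw [congrFun hfg x]
  ring

end ContinuousLogs

/-- The identification of the plane with `ℂ`. -/
noncomputable def planeToComplex : (ℝ × ℝ) ≃L[ℝ] ℂ := Complex.equivRealProdCLM.symm

theorem planeToComplex_sub_ne_zero {x y : ℝ × ℝ} (h : x ≠ y) :
    planeToComplex x - planeToComplex y ≠ 0 :=
  sub_ne_zero.2 (planeToComplex.injective.ne h)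

/-! ### The van Kampen obstruction -/

section VanKampen

theorem exists_int_log_increment (f : ℝ → ℂ) (u v : ℂ) :
    ∃ N : ℤ, Complex.exp u = f 0 → Complex.exp v = f 1 → ∀ L : ℝ → ℂ, Continuous L →
      (∀ t, Complex.exp (L t) = f t) → L 1 - L 0 = v - u + N * (2 * Real.pi * Complex.I) := by
  by_cases h : ∃ L : ℝ → ℂ, Continuous L ∧ (∀ t, Complex.exp (L t) = f t) ∧
    Complex.exp u = f 0 ∧ Complex.exp v = f 1
  · obtain ⟨L, hL, hexp, hu, hv⟩ := h
    obtain ⟨N, hN⟩ := Complex.exp_eq_exp_iff_exists_int.1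
      (show Complex.exp (L 1 - L 0) = Complex.exp (v - u) by
        rw [Complex.exp_sub, Complex.exp_sub, hexp, hexp, hu, hv])
    refine ⟨N, fun _ _ L' hL' hexp' => ?_⟩
    rw [← hN]
    exact log_sub_eq_of_exp_eq hL' hL (fun t => by rw [hexp, hexp']) 1 0
  · exact ⟨0, fun hu hv L hL hexp => absurd ⟨L, hL, hexp, hu, hv⟩ h⟩

variable {ι κ : Type*}

/-- The edges with endpoints `x` and `y` have no common vertex. -/
def DisjointEnds (x y : ι × ι) : Prop :=
  (x.1 ≠ y.1 ∧ x.1 ≠ y.2) ∧ x.2 ≠ y.1 ∧ x.2 ≠ y.2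

theorem DisjointEnds.symm {x y : ι × ι} (h : DisjointEnds x y) : DisjointEnds y x :=
  ⟨⟨h.1.1.symm, h.2.1.symm⟩, h.1.2.symm, h.2.2.symm⟩

instance [DecidableEq ι] : DecidableRel (DisjointEnds (ι := ι)) := fun x y =>
  inferInstanceAs (Decidable ((x.1 ≠ y.1 ∧ x.1 ≠ y.2) ∧ x.2 ≠ y.1 ∧ x.2 ≠ y.2))

variable [LinearOrder ι]

/-- The indicator of `i < j`, as an integer. -/
def ltIndicator (i j : ι) : ℤ := if i < j then 1 else 0

theorem ltIndicator_add_swap {i j : ι} (h : i ≠ j) : ltIndicator i j + ltIndicator j i = 1 := by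
  rcases h.lt_or_gt with h | h <;> simp [ltIndicator, h, h.not_gt]

/-- The signed crossing number of two chords, given by their endpoints, when the index type
numbers points in convex position along their convex hull. -/
def chordCrossing (x y : ι × ι) : ℤ :=
  ltIndicator y.1 x.2 - ltIndicator y.1 x.1 - ltIndicator y.2 x.2 + ltIndicator y.2 x.1

theorem exists_log_directions {P : ι → ℝ × ℝ} (hP : Function.Injective P) :
    ∃ l : ι → ι → ℂ, (∀ i j, l i j = l j i) ∧ ∀ i j, i ≠ j →
      Complex.exp (l i j + ltIndicator j i * (Real.pi * Complex.I)) =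
        planeToComplex (P j) - planeToComplex (P i) := by
  refine ⟨fun i j => Complex.log (planeToComplex (P (max i j)) - planeToComplex (P (min i j))),
    fun i j => by simp only [max_comm, min_comm], fun i j hij => ?_⟩
  have hne := planeToComplex_sub_ne_zero (hP.ne hij)
  have hne' := planeToComplex_sub_ne_zero (hP.ne hij.symm)
  rcases hij.lt_or_gt with h | h
  · simp [ltIndicator, h.le, h.not_gt, Complex.exp_log hne']
  · simp [ltIndicator, h.le, h, Complex.exp_add, Complex.exp_log hne]

/-- `N e k` is the winding of the curve `γ e` about the point `P k`, relative to fixed logarithms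
of the differences of the points. The identity says that the increment of a logarithm of
`γ e s - γ f t` around the boundary of the square of all `(s, t)` vanishes. -/
theorem exists_winding_eq_chordCrossing {P : ι → ℝ × ℝ} (hP : Function.Injective P)
    {ends : κ → ι × ι} {γ : κ → ℝ → ℝ × ℝ} (hγ : ∀ e, Continuous (γ e))
    (hγ0 : ∀ e, γ e 0 = P (ends e).1) (hγ1 : ∀ e, γ e 1 = P (ends e).2) :
    ∃ N : κ → ι → ℤ, ∀ e f, DisjointEnds (ends e) (ends f) → (∀ s t, γ e s ≠ γ f t) →
      N e (ends f).1 - N e (ends f).2 + N f (ends e).2 - N f (ends e).1 =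
        chordCrossing (ends e) (ends f) := by
  obtain ⟨l, hl_symm, hl⟩ := exists_log_directions hP
  choose N hN using fun e k => exists_int_log_increment
    (fun t => planeToComplex (γ e t) - planeToComplex (P k))
    (l k (ends e).1 + ltIndicator (ends e).1 k * (Real.pi * Complex.I))
    (l k (ends e).2 + ltIndicator (ends e).2 k * (Real.pi * Complex.I))
  have hinc (e : κ) (k : ι) (h : (ends e).1 ≠ k ∧ (ends e).2 ≠ k) :=
    hN e k ((hl k _ h.1.symm).trans (by rw [hγ0])) ((hl k _ h.2.symm).trans (by rw [hγ1]))
  refine ⟨N, fun e f hdisj hne => ?_⟩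
  obtain ⟨⟨h11, h12⟩, h21, h22⟩ := hdisj
  have := hγ e
  have := hγ f
  obtain ⟨M, hM_cont, hM⟩ := exists_continuous_log
    (F := fun x : ℝ × ℝ => planeToComplex (γ e x.1) - planeToComplex (γ f x.2)) (by fun_prop)
    fun x => planeToComplex_sub_ne_zero (hne x.1 x.2)
  have bottom := hinc e (ends f).1 ⟨h11, h21⟩ (fun s => M (s, 0)) (by fun_prop)
    fun s => by rw [hM, hγ0]
  have top := hinc e (ends f).2 ⟨h12, h22⟩ (fun s => M (s, 1)) (by fun_prop)
    fun s => by rw [hM, hγ1]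
  have left := hinc f (ends e).1 ⟨h11.symm, h12.symm⟩ (fun t => M (0, t) + Real.pi * Complex.I)
    (by fun_prop) fun t => by rw [Complex.exp_add, hM, hγ0, Complex.exp_pi_mul_I]; ring
  have right := hinc f (ends e).2 ⟨h21.symm, h22.symm⟩ (fun t => M (1, t) + Real.pi * Complex.I)
    (by fun_prop) fun t => by rw [Complex.exp_add, hM, hγ1, Complex.exp_pi_mul_I]; ring
  rw [hl_symm (ends f).1, hl_symm (ends f).1] at bottom
  rw [hl_symm (ends f).2, hl_symm (ends f).2] at top
  have hsquare : 2 * (N e (ends f).1 - N e (ends f).2 + N f (ends e).2 - N f (ends e).1) =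
      chordCrossing (ends e) (ends f) - chordCrossing (ends f) (ends e) := by
    refine Int.cast_injective (α := ℂ) (mul_left_cancel₀ Complex.two_pi_I_ne_zero ?_)
    simp only [chordCrossing]
    push_cast
    linear_combination 2 * (top + left - bottom - right)
  simp only [chordCrossing] at hsquare ⊢
  linarith [ltIndicator_add_swap h11, ltIndicator_add_swap h12, ltIndicator_add_swap h21,
    ltIndicator_add_swap h22]

theorem sum_disjointEnds_lt_add_swap [Fintype κ] {ends : κ → ι × ι} {M : Type*} [AddCommMonoid M]
    (T : κ → κ → M) :
    ∑ x : κ × κ with DisjointEnds (ends x.1) (ends x.2) ∧ (ends x.1).1 < (ends x.2).1,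
      (T x.1 x.2 + T x.2 x.1) = ∑ e, ∑ f with DisjointEnds (ends e) (ends f), T e f := by
  have hswap :
      ∑ x : κ × κ with DisjointEnds (ends x.1) (ends x.2) ∧ (ends x.1).1 < (ends x.2).1,
        T x.2 x.1 =
      ∑ x : κ × κ with DisjointEnds (ends x.1) (ends x.2) ∧ ¬ (ends x.1).1 < (ends x.2).1,
        T x.1 x.2 := by
    refine Finset.sum_equiv (Equiv.prodComm κ κ) (fun x => ?_) fun x _ => rfl
    simp only [Finset.mem_filter_univ, Equiv.prodComm_apply, Prod.fst_swap, Prod.snd_swap, not_lt]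
    exact ⟨fun h => ⟨h.1.symm, h.2.le⟩, fun h => ⟨h.1.symm, h.2.lt_of_ne h.1.symm.1.1⟩⟩
  rw [Finset.sum_add_distrib, hswap, ← Finset.filter_filter, ← Finset.filter_filter,
    Finset.sum_filter_add_sum_filter_not, Finset.sum_filter, Fintype.sum_prod_type]
  simp only [Finset.sum_filter]

/-- In a plane drawing of a graph in which, for every edge `e`, the edges disjoint from `e` form
a cycle modulo 2, the chords of disjoint edges cross an even number of times in total. -/
theorem sum_chordCrossing_eq_zero [Fintype κ] {P : ι → ℝ × ℝ} (hP : Function.Injective P)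
    {ends : κ → ι × ι} {S : κ → Set (ℝ × ℝ)}
    (hjoin : ∀ e, JoinedIn (S e) (P (ends e).1) (P (ends e).2))
    (hdisj : ∀ e f, DisjointEnds (ends e) (ends f) → Disjoint (S e) (S f))
    (hcycle : ∀ e, ∀ φ : ι → ZMod 2,
      ∑ f with DisjointEnds (ends e) (ends f), (φ (ends f).1 + φ (ends f).2) = 0) :
    ∑ x : κ × κ with DisjointEnds (ends x.1) (ends x.2) ∧ (ends x.1).1 < (ends x.2).1,
      (chordCrossing (ends x.1) (ends x.2) : ZMod 2) = 0 := by
  choose γ hγ using hjoin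
  obtain ⟨N, hN⟩ := exists_winding_eq_chordCrossing hP (γ := fun e => (γ e).extend)
    (fun e => (γ e).continuous_extend) (fun e => (γ e).extend_zero) fun e => (γ e).extend_one
  let T (e f : κ) : ZMod 2 := N e (ends f).1 + N e (ends f).2
  have hcrossing (x : κ × κ) (hx : DisjointEnds (ends x.1) (ends x.2)) :
      (chordCrossing (ends x.1) (ends x.2) : ZMod 2) = T x.1 x.2 + T x.2 x.1 := by
    rw [← hN x.1 x.2 hx fun s t => (hdisj _ _ hx).ne_of_mem (hγ _ _) (hγ _ _)]
    push_cast
    simp only [T, CharTwo.sub_eq_add]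
    ring
  rw [Finset.sum_congr rfl fun x hx => hcrossing x (Finset.mem_filter.1 hx).2.1,
    sum_disjointEnds_lt_add_swap]
  exact Finset.sum_eq_zero fun e _ => hcycle e fun k => (N e k : ZMod 2)

theorem not_planar_K33 {P Q : Fin 3 → ℝ × ℝ} (hP : Function.Injective P)
    (hQ : Function.Injective Q) (hPQ : ∀ i j, P i ≠ Q j) {S : Fin 3 → Fin 3 → Set (ℝ × ℝ)}
    (hjoin : ∀ i j, JoinedIn (S i j) (P i) (Q j))
    (hdisj : ∀ i j k m, i ≠ k → j < m → Disjoint (S i j) (S k m)) : False := by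
  have hsum := sum_chordCrossing_eq_zero (P := Fin.append P Q)
    (Fin.append_injective_iff.2 ⟨hP, hQ, hPQ⟩)
    (ends := fun x : Fin 3 × Fin 3 => (Fin.castAdd 3 x.1, Fin.natAdd 3 x.2))
    (S := fun x => S x.1 x.2)
    (fun x => by simpa only [Fin.append_left, Fin.append_right] using hjoin x.1 x.2)
    (fun x y h => by
      have hne := ne_of_apply_ne (Fin.castAdd 3) h.1.1
      rcases lt_or_gt_of_ne (ne_of_apply_ne (Fin.natAdd 3) h.2.2) with hlt | hgt
      · exact hdisj _ _ _ _ hne hlt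
      · exact (hdisj _ _ _ _ hne.symm hgt).symm)
    (by decide +kernel)
  revert hsum
  decide +kernel

theorem not_planar_K5 {P : Fin 3 → ℝ × ℝ} (hP : Function.Injective P) {Q : Fin 2 → ℝ × ℝ}
    (hQ : Function.Injective Q) (hPQ : ∀ i j, P i ≠ Q j) {A : Fin 3 → Set (ℝ × ℝ)}
    (hA : ∀ i, JoinedIn (A i) (P i) (P (i + 1))) {S : Fin 3 → Fin 2 → Set (ℝ × ℝ)}
    (hS : ∀ i j, JoinedIn (S i j) (P i) (Q j)) {U : Set (ℝ × ℝ)} (hU : JoinedIn U (Q 0) (Q 1))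
    (hAS : ∀ i j k, k ≠ i → k ≠ i + 1 → Disjoint (A i) (S k j)) (hAU : ∀ i, Disjoint (A i) U)
    (hSS : ∀ i j k m, i ≠ k → j ≠ m → Disjoint (S i j) (S k m)) : False := by
  have hsum := sum_chordCrossing_eq_zero (P := Fin.append P Q)
    (Fin.append_injective_iff.2 ⟨hP, hQ, hPQ⟩)
    (ends := Sum.elim (fun i : Fin 3 => (Fin.castAdd 2 i, Fin.castAdd 2 (i + 1)))
      (Sum.elim (fun x : Fin 3 × Fin 2 => (Fin.castAdd 2 x.1, Fin.natAdd 3 x.2))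
        fun _ : Unit => (Fin.natAdd 3 0, Fin.natAdd 3 1)))
    (S := Sum.elim A (Sum.elim (fun x => S x.1 x.2) fun _ => U)) ?_ ?_ (by decide +kernel)
  · revert hsum
    decide +kernel
  · rintro (i | x | _)
    · simpa only [Sum.elim_inl, Fin.append_left] using hA i
    · simpa only [Sum.elim_inl, Sum.elim_inr, Fin.append_left, Fin.append_right] using hS x.1 x.2
    · simpa only [Sum.elim_inr, Fin.append_right] using hU
  · rintro (i | x | _) (k | y | _) h
    · exact absurd h (by decide +revert)
    · exact hAS _ _ _ (ne_of_apply_ne (Fin.castAdd 2) h.1.1).symm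
        (ne_of_apply_ne (Fin.castAdd 2) h.2.1).symm
    · exact hAU i
    · exact (hAS _ _ _ (ne_of_apply_ne (Fin.castAdd 2) h.1.1)
        (ne_of_apply_ne (Fin.castAdd 2) h.1.2)).symm
    · exact hSS _ _ _ _ (ne_of_apply_ne (Fin.castAdd 2) h.1.1)
        (ne_of_apply_ne (Fin.natAdd 3) h.2.2)
    · exact absurd h (by decide +revert)
    · exact (hAU k).symm
    · exact absurd h (by decide +revert)
    · exact absurd h (by decide +revert)

end VanKampen

/-! ### Components of the complement of a closed set -/

section General

variable {X : Type*} [TopologicalSpace X] {K : Set X}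

theorem connectedComponentIn_eq_of_joinedIn {F : Set X} {x y : X} (h : JoinedIn F x y) :
    connectedComponentIn F x = connectedComponentIn F y :=
  have hpath := isPathConnected_pathComponentIn h.source_mem
  connectedComponentIn_eq (hpath.isConnected.isPreconnected.subset_connectedComponentIn
    (mem_pathComponentIn_self h.source_mem) pathComponentIn_subset h)

theorem frontier_connectedComponentIn_compl_subset [LocallyConnectedSpace X] (hK : IsClosed K)
    (p : X) : frontier (connectedComponentIn Kᶜ p) ⊆ K := by
  intro z hz
  by_contra hzK
  rw [hK.isOpen_compl.connectedComponentIn.frontier_eq] at hz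
  obtain ⟨w, hwz, hwp⟩ := mem_closure_iff.1 hz.1 _ hK.isOpen_compl.connectedComponentIn
    (mem_connectedComponentIn hzK)
  apply hz.2
  rw [connectedComponentIn_eq hwp, ← connectedComponentIn_eq hwz]
  exact mem_connectedComponentIn hzK

theorem joinedIn_connectedComponentIn_compl [LocallyPathConnectedSpace X] (hK : IsClosed K)
    {x y : X} (hx : x ∉ K) (hy : y ∈ connectedComponentIn Kᶜ x) :
    JoinedIn (connectedComponentIn Kᶜ x) x y :=
  (hK.isOpen_compl.connectedComponentIn.isConnected_iff_isPathConnected.1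
    (isConnected_connectedComponentIn_iff.2 hx)).joinedIn x (mem_connectedComponentIn hx) y hy

theorem exists_joinedIn_insert_connectedComponentIn_compl (hK : IsClosed K) {S : Set X} {r p : X}
    (h : JoinedIn S r p) (hr : r ∉ K) (hp : p ∉ connectedComponentIn Kᶜ r) :
    ∃ x ∈ S ∩ K, JoinedIn (insert x (connectedComponentIn Kᶜ r)) r x := by
  obtain ⟨γ, hγ⟩ := h
  have hγc : Continuous γ.extend := γ.continuous_extend
  have hmeet : (Icc 0 1 ∩ γ.extend ⁻¹' K).Nonempty := by
    by_contra! hempty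
    refine hp ((isPreconnected_Icc.image _ hγc.continuousOn).subset_connectedComponentIn
      ⟨0, left_mem_Icc.2 zero_le_one, γ.extend_zero⟩ ?_
      ⟨1, right_mem_Icc.2 zero_le_one, γ.extend_one⟩)
    rintro _ ⟨t, ht, rfl⟩ htK
    exact (hempty ▸ ⟨ht, htK⟩ : t ∈ (∅ : Set ℝ))
  obtain ⟨t, ⟨⟨ht0, ht1⟩, htK⟩, hfirst⟩ :=
    (isCompact_Icc.inter_right (hK.preimage hγc)).exists_isLeast hmeet
  have ht_pos : 0 < t := ht0.lt_of_ne (by rintro rfl; exact hr (by simpa using htK))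
  have hbefore : γ.extend '' Ico 0 t ⊆ connectedComponentIn Kᶜ r := by
    refine (isPreconnected_Ico.image _ hγc.continuousOn).subset_connectedComponentIn
      ⟨0, ⟨le_rfl, ht_pos⟩, γ.extend_zero⟩ ?_
    rintro _ ⟨s, hs, rfl⟩ hsK
    exact (hfirst ⟨⟨hs.1, hs.2.le.trans ht1⟩, hsK⟩).not_gt hs.2
  refine ⟨γ.extend t, ⟨hγ _, htK⟩, JoinedIn.ofLine (f := fun s => γ.extend (s * t))
    (by fun_prop) (by simp) (by simp) ?_⟩
  rintro _ ⟨s, hs, rfl⟩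
  rcases hs.2.eq_or_lt with rfl | hs1
  · simp
  · exact .inr (hbefore ⟨_, ⟨mul_nonneg hs.1 ht0, mul_lt_of_lt_one_left ht_pos hs1⟩, rfl⟩)

end General

section Normed

variable {X : Type*} [NormedAddCommGroup X] [NormedSpace ℝ X] {K : Set X}

theorem isPreconnected_compl_closedBall (h : 1 < Module.rank ℝ X) {R : ℝ} (hR : 0 ≤ R) :
    IsPreconnected (Metric.closedBall (0 : X) R)ᶜ := by
  have himage : (Metric.closedBall (0 : X) R)ᶜ = (fun z : X => (1 + R * ‖z‖⁻¹) • z) '' {0}ᶜ := by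
    ext z
    simp only [mem_compl_iff, mem_closedBall_zero_iff, not_le]
    constructor
    · intro hz
      have hz0 : 0 < ‖z‖ := hR.trans_lt hz
      have hfactor : 0 < (‖z‖ - R) / ‖z‖ := div_pos (sub_pos.2 hz) hz0
      refine ⟨((‖z‖ - R) / ‖z‖) • z, smul_ne_zero hfactor.ne' (norm_pos_iff.1 hz0), ?_⟩
      have hsub : ‖z‖ - R ≠ 0 := (sub_pos.2 hz).ne'
      simp only [norm_smul, Real.norm_of_nonneg hfactor.le, smul_smul,
        div_mul_cancel₀ _ hz0.ne']
      convert one_smul ℝ z using 2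
      field_simp
      ring
    · rintro ⟨w, hw, rfl⟩
      have hw0 : 0 < ‖w‖ := norm_pos_iff.2 hw
      rw [norm_smul, Real.norm_of_nonneg (by positivity), add_mul, one_mul,
        inv_mul_cancel_right₀ hw0.ne']
      exact lt_add_of_pos_left R hw0
  rw [himage]
  refine (isConnected_compl_singleton_of_one_lt_rank h 0).isPreconnected.image _ fun x hx => ?_
  have hx0 : ‖x‖ ≠ 0 := norm_ne_zero_iff.2 hx
  exact ContinuousAt.continuousWithinAt (by fun_prop (disch := assumption))

theorem connectedComponentIn_compl_eq_of_not_isBounded (h : 1 < Module.rank ℝ X)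
    (hK : Bornology.IsBounded K) {x y : X}
    (hx : ¬ Bornology.IsBounded (connectedComponentIn Kᶜ x))
    (hy : ¬ Bornology.IsBounded (connectedComponentIn Kᶜ y)) :
    connectedComponentIn Kᶜ x = connectedComponentIn Kᶜ y := by
  obtain ⟨R, hR, hKR⟩ := hK.subset_closedBall_lt 0 0
  have hfar {w : X} (hw : ¬ Bornology.IsBounded (connectedComponentIn Kᶜ w)) :
      ∃ z ∈ connectedComponentIn Kᶜ w, z ∈ (Metric.closedBall (0 : X) R)ᶜ :=
    not_subset.1 fun hsub => hw (Metric.isBounded_closedBall.subset hsub)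
  obtain ⟨x', hx', hx'R⟩ := hfar hx
  obtain ⟨y', hy', hy'R⟩ := hfar hy
  rw [connectedComponentIn_eq hx', connectedComponentIn_eq hy']
  exact connectedComponentIn_eq ((isPreconnected_compl_closedBall h
    hR.le).subset_connectedComponentIn hx'R (compl_subset_compl.2 hKR) hy'R)

theorem exists_not_isBounded_connectedComponentIn_compl (h : 1 < Module.rank ℝ X)
    (hK : Bornology.IsBounded K) :
    ∃ r ∉ K, ¬ Bornology.IsBounded (connectedComponentIn Kᶜ r) := by
  obtain ⟨R, hR, hKR⟩ := hK.subset_closedBall_lt 0 0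
  have : Nontrivial X := rank_pos_iff_nontrivial.1 (zero_lt_one.trans h)
  have hunbounded : ¬ Bornology.IsBounded (Metric.closedBall (0 : X) R)ᶜ := fun hb =>
    NormedSpace.unbounded_univ ℝ X
      (union_compl_self (Metric.closedBall (0 : X) R) ▸ Metric.isBounded_closedBall.union hb)
  obtain ⟨r, hr⟩ : (Metric.closedBall (0 : X) R)ᶜ.Nonempty :=
    nonempty_iff_ne_empty.2 fun hempty => hunbounded (hempty ▸ Bornology.isBounded_empty)
  exact ⟨r, fun h => hr (hKR h), fun hb => hunbounded (hb.subset
    ((isPreconnected_compl_closedBall h hR.le).subset_connectedComponentIn hr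
      (compl_subset_compl.2 hKR)))⟩

end Normed

/-! ### Sets that do not bound any region of the plane -/

section HasContinuousLogs

/-- Every nowhere vanishing continuous complex function on `K` has a continuous logarithm on `K`.
For compact subsets of the plane this is Eilenberg's criterion for not separating the plane. -/
def HasContinuousLogs {X : Type*} [TopologicalSpace X] (K : Set X) : Prop :=
  ∀ F : X → ℂ, ContinuousOn F K → (∀ z ∈ K, F z ≠ 0) →
    ∃ g : X → ℂ, ContinuousOn g K ∧ ∀ z ∈ K, Complex.exp (g z) = F z

theorem HasContinuousLogs.union {X : Type*} [TopologicalSpace X] {A B : Set X} {c : X}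
    (hA : HasContinuousLogs A) (hB : HasContinuousLogs B) (hA_closed : IsClosed A)
    (hB_closed : IsClosed B) (hAB : A ∩ B = {c}) : HasContinuousLogs (A ∪ B) := by
  classical
  intro F hF hF0
  obtain ⟨gA, hgA, hexpA⟩ := hA F (hF.mono subset_union_left) fun z hz => hF0 z (.inl hz)
  obtain ⟨gB, hgB, hexpB⟩ := hB F (hF.mono subset_union_right) fun z hz => hF0 z (.inr hz)
  obtain ⟨hcA, hcB⟩ : c ∈ A ∩ B := hAB ▸ mem_singleton c
  let gB' (z : X) : ℂ := gB z + (gA c - gB c)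
  have hglue : EqOn (A.piecewise gA gB') gB' B := by
    intro z hz
    by_cases hzA : z ∈ A
    · obtain rfl : z = c := hAB.subset ⟨hzA, hz⟩
      simp [gB', hzA]
    · exact piecewise_eq_of_notMem A gA gB' hzA
  refine ⟨A.piecewise gA gB', ContinuousOn.union_of_isClosed
    (hgA.congr (piecewise_eqOn A gA gB')) ((hgB.add continuousOn_const).congr hglue)
    hA_closed hB_closed, ?_⟩
  rintro z (hz | hz)
  · rw [piecewise_eq_of_mem A gA gB' hz, hexpA z hz]
  · rw [hglue hz, Complex.exp_add, hexpB z hz, Complex.exp_sub, hexpA c hcA, hexpB c hcB,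
      div_self (hF0 c (.inl hcA)), mul_one]

theorem exists_exp_ne_sub_of_isBounded {C : Set (ℝ × ℝ)} (hC : Bornology.IsBounded C)
    {G : ℝ × ℝ → ℂ} (hG : Continuous G) (p : ℝ × ℝ) :
    ∃ z ∉ C, Complex.exp (G z) ≠ planeToComplex z - planeToComplex p := by
  by_contra! hexp
  obtain ⟨ρ, hρ, hCρ⟩ := ((planeToComplex : (ℝ × ℝ) →L[ℝ] ℂ).lipschitz.isBounded_image
    hC).subset_ball_lt 0 (planeToComplex p)
  let circle (t : ℝ) : ℝ × ℝ :=
    planeToComplex.symm (planeToComplex p + Complex.exp (Real.log ρ + t * Complex.I))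
  have hcircle_sub (t : ℝ) : planeToComplex (circle t) - planeToComplex p =
      Complex.exp (Real.log ρ + t * Complex.I) := by simp [circle]
  have hcircle_notMem (t : ℝ) : circle t ∉ C := fun ht => by
    have hlt : ‖planeToComplex (circle t) - planeToComplex p‖ < ρ := by
      simpa only [mem_ball_iff_norm] using hCρ (mem_image_of_mem planeToComplex ht)
    rw [hcircle_sub, Complex.norm_exp] at hlt
    simp [Real.exp_log hρ] at hlt
  have hclosed : circle (2 * Real.pi) = circle 0 := by
    simp [circle, Complex.exp_add, Complex.exp_two_pi_mul_I]
  have hincrement := log_sub_eq_of_exp_eq (f := fun t : ℝ => G (circle t))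
    (g := fun t : ℝ => Real.log ρ + t * Complex.I) (by fun_prop) (by fun_prop)
    (fun t => by rw [hexp _ (hcircle_notMem t), hcircle_sub]) (2 * Real.pi) 0
  rw [hclosed] at hincrement
  simp [Real.pi_ne_zero] at hincrement

theorem HasContinuousLogs.not_isBounded_connectedComponentIn_compl {K : Set (ℝ × ℝ)}
    (h : HasContinuousLogs K) (hK : IsClosed K) {p : ℝ × ℝ} (hp : p ∉ K) :
    ¬ Bornology.IsBounded (connectedComponentIn Kᶜ p) := by
  classical
  intro hb
  obtain ⟨g, hg, hexp⟩ := h (fun z => planeToComplex z - planeToComplex p) (by fun_prop)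
    fun z hz => planeToComplex_sub_ne_zero (ne_of_mem_of_not_mem hz hp)
  obtain ⟨g', hg'⟩ := ContinuousMap.exists_restrict_eq hK
    ⟨K.domRestrict g, continuousOn_iff_continuous_domRestrict.1 hg⟩
  have hext : ∀ z ∈ K, g' z = g z := fun z hz => DFunLike.congr_fun hg' ⟨z, hz⟩
  set C := connectedComponentIn Kᶜ p
  let H : ℝ × ℝ → ℂ :=
    C.piecewise (fun z => Complex.exp (g' z)) fun z => planeToComplex z - planeToComplex p
  have hH_out {z : ℝ × ℝ} (hz : z ∉ C) : H z = planeToComplex z - planeToComplex p :=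
    piecewise_eq_of_notMem C _ _ hz
  have hH : Continuous H := by
    refine Continuous.piecewise (fun z hz => ?_) (by fun_prop) (by fun_prop)
    have hzK := frontier_connectedComponentIn_compl_subset hK p hz
    rw [hext z hzK, hexp z hzK]
  have hH0 : ∀ z, H z ≠ 0 := fun z => by
    by_cases hz : z ∈ C
    · simp [H, hz, Complex.exp_ne_zero]
    · rw [hH_out hz]
      exact planeToComplex_sub_ne_zero (ne_of_mem_of_not_mem (mem_connectedComponentIn hp) hz).symm
  obtain ⟨G, hG, hexpG⟩ := exists_continuous_log hH hH0
  obtain ⟨z, hz, hne⟩ := exists_exp_ne_sub_of_isBounded hb hG p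
  exact hne ((hexpG z).trans (hH_out hz))

end HasContinuousLogs

section Arcs

variable {X : Type*} [TopologicalSpace X] {A : Set X} {x y z : X}

/-- `A` is a simple arc from `x` to `y`. -/
def IsArc (A : Set X) (x y : X) : Prop :=
  ∃ f : ℝ → X, ContinuousOn f (Icc 0 1) ∧ InjOn f (Icc 0 1) ∧ f 0 = x ∧ f 1 = y ∧
    f '' Icc 0 1 = A

namespace IsArc

theorem isCompact (h : IsArc A x y) : IsCompact A := by
  obtain ⟨f, hf, -, -, -, rfl⟩ := h
  exact isCompact_Icc.image_of_continuousOn hf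

theorem joinedIn (h : IsArc A x y) : JoinedIn A x y := by
  obtain ⟨f, hf, -, h0, h1, rfl⟩ := h
  exact JoinedIn.ofLine hf h0 h1 Subset.rfl

theorem joinedIn_diff_singleton (h : IsArc A x y) (hz : z ∈ A) (hzy : z ≠ y) :
    JoinedIn (A \ {y}) z x := by
  obtain ⟨f, hf, hinj, rfl, rfl, rfl⟩ := h
  obtain ⟨t, ht, rfl⟩ := hz
  have ht1 : t < 1 := ht.2.lt_of_ne (by rintro rfl; exact hzy rfl)
  have hsub : MapsTo (fun s : ℝ => t * (1 - s)) (Icc 0 1) (Icc 0 t) := fun s hs =>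
    ⟨mul_nonneg ht.1 (sub_nonneg.2 hs.2), mul_le_of_le_one_right ht.1 (by linarith [hs.1])⟩
  refine JoinedIn.ofLine (f := fun s => f (t * (1 - s)))
    (hf.comp (by fun_prop) (hsub.mono_right (Icc_subset_Icc_right ht.2))) (by simp) (by simp) ?_
  rintro _ ⟨s, hs, rfl⟩
  have hmem : t * (1 - s) ∈ Icc (0 : ℝ) 1 := Icc_subset_Icc_right ht.2 (hsub hs)
  refine ⟨mem_image_of_mem f hmem, fun heq => ?_⟩
  exact ((hsub hs).2.trans_lt ht1).ne (hinj hmem (right_mem_Icc.2 zero_le_one) heq)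

theorem hasContinuousLogs [T4Space X] (h : IsArc A x y) : HasContinuousLogs A := by
  obtain ⟨f, hf, hinj, -, -, rfl⟩ := h
  intro F hF hF0
  have hemb := (continuousOn_iff_continuous_domRestrict.1 hf).isClosedEmbedding
    (injOn_iff_injective.1 hinj)
  let f' (t : ℝ) : X := f (projIcc 0 1 zero_le_one t)
  have hf' : Continuous f' :=
    (continuousOn_iff_continuous_domRestrict.1 hf).comp continuous_projIcc
  have hmem (t : ℝ) : f' t ∈ f '' Icc 0 1 := mem_image_of_mem f (projIcc 0 1 _ t).2
  obtain ⟨G, hG, hexp⟩ := exists_continuous_log (F := F ∘ f')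
    (hF.comp_continuous hf' hmem) fun t => hF0 _ (hmem t)
  obtain ⟨g, hg⟩ := ContinuousMap.exists_extension' hemb ⟨fun t => G t, by fun_prop⟩
  refine ⟨g, g.continuous.continuousOn, ?_⟩
  rintro _ ⟨t, ht, rfl⟩
  rw [show g (f t) = G t from congrFun hg ⟨t, ht⟩, hexp]
  simp only [Function.comp_apply, f', projIcc_of_mem zero_le_one ht]

/-- The ray from `r` towards a point on the other side of the closed curve `A ∪ B` can avoid `B`,
since `B` alone does not separate the plane; it therefore reaches `A` first. -/
theorem joinedIn_connectedComponentIn_compl_union {A B : Set (ℝ × ℝ)} {x y p r : ℝ × ℝ}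
    (hA : IsArc A x y) (hB : HasContinuousLogs B) (hB_compact : IsCompact B) (hy : y ∈ B)
    (hr : r ∉ A ∪ B) (hp : p ∉ A ∪ B) (hrp : p ∉ connectedComponentIn (A ∪ B)ᶜ r) :
    JoinedIn (connectedComponentIn (A ∪ B)ᶜ r ∪ A \ {y}) r x := by
  have hrB : r ∉ B := fun h => hr (.inr h)
  have hpB : p ∉ B := fun h => hp (.inr h)
  have hB_closed := hB_compact.isClosed
  have hcomp := connectedComponentIn_compl_eq_of_not_isBounded (by simp; norm_num)
    hB_compact.isBounded (hB.not_isBounded_connectedComponentIn_compl hB_closed hrB)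
    (hB.not_isBounded_connectedComponentIn_compl hB_closed hpB)
  have hpath : JoinedIn Bᶜ r p := (joinedIn_connectedComponentIn_compl hB_closed hrB
    (hcomp ▸ mem_connectedComponentIn hpB)).mono (connectedComponentIn_subset Bᶜ r)
  obtain ⟨w, ⟨hwB, hw⟩, hrw⟩ := exists_joinedIn_insert_connectedComponentIn_compl
    (hA.isCompact.union hB_compact).isClosed hpath hr hrp
  have hwA : w ∈ A := hw.resolve_right hwB
  have hwy : w ≠ y := (ne_of_mem_of_not_mem hy hwB).symm
  exact (hrw.mono (insert_subset (.inr ⟨hwA, hwy⟩) subset_union_left)).trans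
    ((hA.joinedIn_diff_singleton hwA hwy).mono subset_union_right)

end IsArc

end Arcs

/-! ### Fragments at a triangle -/

section Fragments

variable {V : Type u} {G : SimpleGraph V} {S T C C' : Set V}

theorem eq_or_eq_add_one_or_eq_add_two (i k : Fin 3) : k = i ∨ k = i + 1 ∨ k = i + 2 := by
  decide +revert

theorem exists_adj_of_preconnected_induce (hS : (G.induce S).Preconnected) {A : Set V} {x y : V}
    (hxS : x ∈ S) (hxA : x ∈ A) (hyS : y ∈ S) (hyA : y ∉ A) :
    ∃ u ∈ S ∩ A, ∃ v ∈ S \ A, G.Adj u v := by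
  obtain ⟨p⟩ := hS ⟨x, hxS⟩ ⟨y, hyS⟩
  obtain ⟨d, -, hfst, hsnd⟩ := p.exists_boundary_dart (Subtype.val ⁻¹' A) hxA hyA
  exact ⟨d.fst, ⟨d.fst.2, hfst⟩, d.snd, ⟨d.snd.2, hsnd⟩, d.adj⟩

/-- `C` is a fragment of `G` at `T`: the vertex set of a connected component of `G - T`. -/
structure IsFragment (G : SimpleGraph V) (T C : Set V) : Prop where
  connected : (G.induce C).Connected
  disjoint : Disjoint C T
  mem_of_adj : ∀ ⦃x y⦄, x ∈ C → G.Adj x y → y ∉ T → y ∈ C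

namespace IsFragment

theorem of_connectedComponent (K : (G.induce Tᶜ).ConnectedComponent) :
    IsFragment G T (Subtype.val '' K.supp) where
  connected := by
    let toImage : K.toSimpleGraph →g G.induce (Subtype.val '' K.supp) :=
      ⟨fun x => ⟨x.1.1, mem_image_of_mem _ x.2⟩, fun h => h⟩
    refine K.connected_toSimpleGraph.map toImage ?_
    rintro ⟨_, x, hx, rfl⟩
    exact ⟨⟨x, hx⟩, rfl⟩
  disjoint := disjoint_left.2 (by rintro _ ⟨x, -, rfl⟩; exact x.2)
  mem_of_adj := by
    rintro _ y ⟨x, hx, rfl⟩ hxy hy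
    exact ⟨⟨y, hy⟩, K.mem_supp_of_adj_mem_supp hx hxy, rfl⟩

theorem exists_disjoint (hT : ¬ (G.induce Tᶜ).Preconnected) :
    ∃ C : Fin 2 → Set V,
      (∀ j, IsFragment G T (C j)) ∧ Pairwise fun j k => Disjoint (C j) (C k) := by
  obtain ⟨x, y, hxy⟩ : ∃ x y, ¬ (G.induce Tᶜ).Reachable x y := by
    by_contra! h
    exact hT h
  let K : Fin 2 → (G.induce Tᶜ).ConnectedComponent :=
    ![(G.induce Tᶜ).connectedComponentMk x, (G.induce Tᶜ).connectedComponentMk y]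
  have hK : Function.Injective K :=
    List.nodup_ofFn.1 (by simpa [K, SimpleGraph.ConnectedComponent.eq] using hxy)
  exact ⟨fun j => Subtype.val '' (K j).supp, fun j => of_connectedComponent (K j), fun j k hjk =>
    (disjoint_image_iff Subtype.val_injective).2
      (SimpleGraph.pairwise_disjoint_supp_connectedComponent _ (hK.ne hjk))⟩

theorem exists_adj (hC : IsFragment G T C) (hC' : IsFragment G T C') (hCC' : Disjoint C C') {s : V}
    (hs : (G.induce (T \ {s})ᶜ).Preconnected) : ∃ x ∈ C, G.Adj s x := by
  obtain ⟨⟨x, hx⟩⟩ := hC.connected.nonempty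
  obtain ⟨⟨y, hy⟩⟩ := hC'.connected.nonempty
  obtain ⟨u, ⟨-, hu⟩, v, ⟨hvT, hv⟩, huv⟩ := exists_adj_of_preconnected_induce hs
    (fun h => hC.disjoint.notMem_of_mem_left hx h.1) hx
    (fun h => hC'.disjoint.notMem_of_mem_left hy h.1) (hCC'.notMem_of_mem_right hy)
  obtain rfl : v = s := by
    by_contra hvs
    exact hv (hC.mem_of_adj hu huv fun h => hvT ⟨h, hvs⟩)
  exact ⟨u, hu, huv.symm⟩

variable {t : (⊤ : SimpleGraph (Fin 3)) →g G}

theorem ne_triangle (hC : IsFragment G (range t) C) {x : V} (hx : x ∈ C) (i : Fin 3) : x ≠ t i :=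
  fun h => hC.disjoint.notMem_of_mem_left hx ⟨i, h.symm⟩

theorem triangle_mem_insert_iff (hC : IsFragment G (range t) C) {i k : Fin 3} :
    t k ∈ insert (t i) C ↔ k = i := by
  rw [mem_insert_iff, or_iff_left fun h => hC.ne_triangle h k rfl, t.injective_of_top_hom.eq_iff]

theorem insert_inter_subset_singleton (hC : IsFragment G (range t) C) (i : Fin 3)
    (hS : S ⊆ range t) : insert (t i) C ∩ S ⊆ {t i} := by
  rintro _ ⟨hx, hxS⟩
  obtain ⟨k, rfl⟩ := hS hxS
  rw [hC.triangle_mem_insert_iff.1 hx, mem_singleton_iff]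

theorem disjoint_insert_insert_triangle (hC : IsFragment G (range t) C)
    (hC' : IsFragment G (range t) C') (hCC' : Disjoint C C') {i k : Fin 3} (hik : i ≠ k) :
    Disjoint (insert (t i) C) (insert (t k) C') := by
  rw [disjoint_insert_left, hC'.triangle_mem_insert_iff, disjoint_insert_right]
  exact ⟨hik, fun h => hC.ne_triangle h k rfl, hCC'⟩

theorem neighborSet_triangle {C : Fin 2 → Set V} (hC : ∀ j, IsFragment G (range t) (C j))
    (hdisj : Pairwise fun j k => Disjoint (C j) (C k)) {i : Fin 3}
    (hdeg : (G.neighborSet (t i)).encard ≤ 4) {n : Fin 2 → V} (hnC : ∀ j, n j ∈ C j)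
    (hn : ∀ j, G.Adj (t i) (n j)) :
    (G.neighborSet (t i)).encard = 4 ∧
      G.neighborSet (t i) = {t (i + 1), t (i + 2), n 0, n 1} := by
  have hne (k l : Fin 3) (hkl : k ≠ l) : t k ≠ t l := (t.injective_of_top_hom).ne hkl
  have h01 : n 0 ≠ n 1 := (hdisj (by decide)).ne_of_mem (hnC 0) (hnC 1)
  have hcard : ({t (i + 1), t (i + 2), n 0, n 1} : Set V).encard = 4 := by
    rw [encard_insert_of_notMem, encard_insert_of_notMem, encard_pair h01]
    · norm_num
    · simp [((hC _).ne_triangle (hnC _) _).symm]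
    · simp [((hC _).ne_triangle (hnC _) _).symm, hne]
  have hsub : {t (i + 1), t (i + 2), n 0, n 1} ⊆ G.neighborSet (t i) := by
    rintro _ (rfl | rfl | rfl | rfl)
    · exact t.map_adj (by simp)
    · exact t.map_adj (by simp)
    · exact hn 0
    · exact hn 1
  have heq := (finite_of_encard_eq_coe hcard).eq_of_subset_of_encard_le hsub
    (hdeg.trans_eq hcard.symm)
  exact ⟨heq ▸ hcard, heq.symm⟩

variable {n : Fin 3 → V}

/-- If two triangle vertices share their only neighbour `x` in `C`, then `x` and the third triangle
vertex would separate the rest of `C` from the triangle. -/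
theorem neighbor_add_two_eq (hconn : ∀ u v, (G.induce {w | w ≠ u ∧ w ≠ v}).Preconnected)
    (hC : IsFragment G (range t) C) (hnC : ∀ i, n i ∈ C)
    (hn : ∀ i, ∀ x ∈ C, G.Adj (t i) x → x = n i) {i : Fin 3} (h : n (i + 1) = n i) :
    n (i + 2) = n i := by
  by_contra hne
  obtain ⟨u, ⟨⟨hun, -⟩, hu⟩, v, ⟨⟨-, hvt⟩, hv⟩, huv⟩ := exists_adj_of_preconnected_induce
    (hconn (n i) (t (i + 2))) ⟨hne, hC.ne_triangle (hnC _) _⟩ (hnC (i + 2))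
    ⟨(hC.ne_triangle (hnC _) i).symm, t.injective_of_top_hom.ne (by simp)⟩
    (fun hti => hC.ne_triangle hti i rfl)
  obtain ⟨k, rfl⟩ : v ∈ range t := by
    by_contra hvT
    exact hv (hC.mem_of_adj hu huv hvT)
  obtain rfl | rfl | rfl := eq_or_eq_add_one_or_eq_add_two i k
  · exact hun (hn _ u hu huv.symm)
  · exact hun ((hn _ u hu huv.symm).trans h)
  · exact hvt rfl

theorem injective_or_forall_eq (hconn : ∀ u v, (G.induce {w | w ≠ u ∧ w ≠ v}).Preconnected)
    (hC : IsFragment G (range t) C) (hnC : ∀ i, n i ∈ C)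
    (hn : ∀ i, ∀ x ∈ C, G.Adj (t i) x → x = n i) :
    Function.Injective n ∨ ∀ i k, n i = n k := by
  refine or_iff_not_imp_left.2 fun hinj => ?_
  have hconsecutive : ∃ i, n (i + 1) = n i := by
    simp only [Function.Injective, not_forall] at hinj
    obtain ⟨i, j, heq, hij⟩ := hinj
    obtain rfl | rfl | rfl := eq_or_eq_add_one_or_eq_add_two i j
    exacts [absurd rfl hij, ⟨i, heq.symm⟩, ⟨i + 2, by simpa [add_assoc] using heq⟩]
  obtain ⟨i, hi⟩ := hconsecutive
  have hall (k : Fin 3) : n k = n i := by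
    obtain rfl | rfl | rfl := eq_or_eq_add_one_or_eq_add_two i k
    exacts [rfl, hi, hC.neighbor_add_two_eq hconn hnC hn hi]
  exact fun k l => (hall k).trans (hall l).symm

end IsFragment

end Fragments

/-! ### Fragments in a plane embedding -/

namespace PlaneEmbedding

variable {V : Type u} {G : SimpleGraph V} (E : PlaneEmbedding G) {S T C : Set V} {u v w : V}

theorem isArc_arc (h : G.Adj u v) : IsArc (E.arc h) (E.pos u) (E.pos v) := E.arc_curve h

/-- The union of the arcs of the edges of `G` with both ends in `S`. -/
def inducedDrawing (S : Set V) : Set (ℝ × ℝ) :=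
  {z | ∃ u ∈ S, ∃ v ∈ S, ∃ h : G.Adj u v, z ∈ E.arc h}

theorem arc_subset_inducedDrawing (h : G.Adj u v) (hu : u ∈ S) (hv : v ∈ S) :
    E.arc h ⊆ E.inducedDrawing S :=
  fun _ hz => ⟨u, hu, v, hv, h, hz⟩

theorem inducedDrawing_mono (hST : S ⊆ T) : E.inducedDrawing S ⊆ E.inducedDrawing T :=
  fun _ ⟨_, hu, _, hv, h, hz⟩ => E.arc_subset_inducedDrawing h (hST hu) (hST hv) hz

theorem mem_of_pos_mem_inducedDrawing (h : E.pos w ∈ E.inducedDrawing S) : w ∈ S := by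
  obtain ⟨u, hu, v, hv, huv, hw⟩ := h
  rcases E.pos_arc huv w hw with rfl | rfl
  exacts [hu, hv]

theorem inducedDrawing_pair (h : G.Adj u v) : E.inducedDrawing {u, v} = E.arc h := by
  refine Subset.antisymm ?_ (E.arc_subset_inducedDrawing h (by simp) (by simp))
  rintro z ⟨_, rfl | rfl, _, rfl | rfl, h', hz⟩
  exacts [(h'.ne rfl).elim, hz, (E.arc_symm h).subset hz, (h'.ne rfl).elim]

theorem inducedDrawing_inter_subset (hST : (S ∩ T).Subsingleton) :
    E.inducedDrawing S ∩ E.inducedDrawing T ⊆ E.pos '' (S ∩ T) := by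
  rintro z ⟨⟨u, hu, v, hv, huv, hz⟩, ⟨u', hu', v', hv', huv', hz'⟩⟩
  have hne : s(u, v) ≠ s(u', v') := by
    intro heq
    rcases Sym2.eq_iff.1 heq with ⟨rfl, rfl⟩ | ⟨rfl, rfl⟩
    · exact huv.ne (hST ⟨hu, hu'⟩ ⟨hv, hv'⟩)
    · exact huv.ne (hST ⟨hu, hv'⟩ ⟨hv, hu'⟩)
  have hends : z ∈ E.pos '' S ∩ E.pos '' T := by
    refine (inter_subset_inter ?_ ?_) (E.arc_inter huv huv' hne ⟨hz, hz'⟩)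
    · exact pair_subset (mem_image_of_mem _ hu) (mem_image_of_mem _ hv)
    · exact pair_subset (mem_image_of_mem _ hu') (mem_image_of_mem _ hv')
  rwa [image_inter E.pos_inj]

theorem disjoint_inducedDrawing (hST : Disjoint S T) :
    Disjoint (E.inducedDrawing S) (E.inducedDrawing T) := by
  rw [disjoint_iff_inter_eq_empty] at hST ⊢
  simpa [hST] using E.inducedDrawing_inter_subset (S := S) (T := T) (by simp [hST])

theorem joinedIn_of_inducedDrawing_subset (hC : (G.induce C).Preconnected) {F : Set (ℝ × ℝ)}
    (hF : E.inducedDrawing C ⊆ F) (hu : u ∈ C) (hv : v ∈ C) (huF : E.pos u ∈ F) :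
    JoinedIn F (E.pos u) (E.pos v) := by
  suffices ∀ {x y : C}, (G.induce C).Walk x y → E.pos x ∈ F → JoinedIn F (E.pos x) (E.pos y) by
    obtain ⟨p⟩ := hC ⟨u, hu⟩ ⟨v, hv⟩
    exact this p huF
  intro x y p hxF
  induction p with
  | nil => exact JoinedIn.refl hxF
  | cons h _ ih =>
    have hedge := (E.isArc_arc h).joinedIn.mono
      ((E.arc_subset_inducedDrawing h (Subtype.prop _) (Subtype.prop _)).trans hF)
    exact hedge.trans (ih hedge.target_mem)

variable {s c : V} {z : ℝ × ℝ}

theorem joinedIn_inducedDrawing_insert (hC : (G.induce C).Preconnected) (hc : c ∈ C)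
    (hs : ∃ x ∈ C, G.Adj s x) :
    JoinedIn (E.inducedDrawing (insert s C)) (E.pos s) (E.pos c) := by
  obtain ⟨x, hx, hsx⟩ := hs
  have hCs : insert s C = {s, x} ∪ C := by grind
  have hconn := SimpleGraph.induce_union_connected
    (SimpleGraph.induce_pair_connected_of_adj hsx).preconnected hC ⟨x, by simp, hx⟩
  rw [← hCs] at hconn
  exact E.joinedIn_of_inducedDrawing_subset hconn.preconnected Subset.rfl (mem_insert s C)
    (mem_insert_of_mem s hc) (E.arc_subset_inducedDrawing hsx (mem_insert s C)
      (mem_insert_of_mem s hx) (E.isArc_arc hsx).joinedIn.source_mem)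

theorem joinedIn_inducedDrawing_insert_diff (hC : (G.induce C).Preconnected) (hs : s ∉ C)
    (hc : c ∈ C) (hz : z ∈ E.inducedDrawing (insert s C)) (hzs : z ≠ E.pos s) :
    JoinedIn (E.inducedDrawing (insert s C) \ {E.pos s}) z (E.pos c) := by
  have hCsub : E.inducedDrawing C ⊆ E.inducedDrawing (insert s C) \ {E.pos s} := by
    rintro y ⟨u, hu, v, hv, h, hy⟩
    refine ⟨⟨u, .inr hu, v, .inr hv, h, hy⟩, ?_⟩
    rintro rfl
    exact hs (E.mem_of_pos_mem_inducedDrawing ⟨u, hu, v, hv, h, hy⟩)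
  have hreach : ∃ u ∈ C, JoinedIn (E.inducedDrawing (insert s C) \ {E.pos s}) z (E.pos u) := by
    obtain ⟨u, hu, v, hv, h, hz'⟩ : ∃ u ∈ C, ∃ v ∈ insert s C, ∃ h : G.Adj u v, z ∈ E.arc h := by
      obtain ⟨u, rfl | hu, v, hv, h, hz'⟩ := hz
      · exact ⟨v, hv.resolve_left h.ne', u, mem_insert _ _, h.symm, (E.arc_symm h).symm ▸ hz'⟩
      · exact ⟨u, hu, v, hv, h, hz'⟩
    by_cases hzv : z = E.pos v
    · obtain rfl | hv := hv
      · exact absurd hzv hzs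
      · exact ⟨v, hv, hzv ▸ JoinedIn.refl ⟨hz, hzs⟩⟩
    refine ⟨u, hu, ((E.isArc_arc h).joinedIn_diff_singleton hz' hzv).mono fun y hy =>
      ⟨⟨u, .inr hu, v, hv, h, hy.1⟩, ?_⟩⟩
    rintro rfl
    obtain rfl | rfl := E.pos_arc h s hy.1
    exacts [hs hu, hy.2 rfl]
  obtain ⟨u, hu, hzu⟩ := hreach
  exact hzu.trans (E.joinedIn_of_inducedDrawing_subset hC hCsub hu hc hzu.target_mem)

section Triangle

variable (t : (⊤ : SimpleGraph (Fin 3)) →g G)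

theorem isArc_inducedDrawing_side (i : Fin 3) :
    IsArc (E.inducedDrawing {t i, t (i + 1)}) (E.pos (t i)) (E.pos (t (i + 1))) := by
  have h : G.Adj (t i) (t (i + 1)) := t.map_adj (by simp)
  exact E.inducedDrawing_pair h ▸ E.isArc_arc h

theorem inducedDrawing_side_subset (i : Fin 3) :
    E.inducedDrawing {t i, t (i + 1)} ⊆ E.inducedDrawing (range t) :=
  E.inducedDrawing_mono (pair_subset (mem_range_self _) (mem_range_self _))

theorem inducedDrawing_side_inter_side (i : Fin 3) :
    E.inducedDrawing {t i, t (i + 1)} ∩ E.inducedDrawing {t (i + 1), t (i + 1 + 1)} =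
      {E.pos (t (i + 1))} := by
  have hends : ({t i, t (i + 1)} ∩ {t (i + 1), t (i + 1 + 1)} : Set V) = {t (i + 1)} := by
    have hfin : ({i, i + 1} ∩ {i + 1, i + 1 + 1} : Set (Fin 3)) = {i + 1} := by
      ext k
      simp only [mem_inter_iff, mem_insert_iff, mem_singleton_iff]
      decide +revert
    simpa only [image_inter t.injective_of_top_hom, image_pair, image_singleton] using
      congrArg (t '' ·) hfin
  refine Subset.antisymm ?_ (singleton_subset_iff.2
    ⟨(E.isArc_inducedDrawing_side t i).joinedIn.target_mem,
      (E.isArc_inducedDrawing_side t (i + 1)).joinedIn.source_mem⟩)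
  exact (E.inducedDrawing_inter_subset (by simp [hends])).trans (by simp [hends])

theorem inducedDrawing_range_triangle (i : Fin 3) :
    E.inducedDrawing (range t) = E.inducedDrawing {t i, t (i + 1)} ∪
      (E.inducedDrawing {t (i + 1), t (i + 1 + 1)} ∪
        E.inducedDrawing {t (i + 1 + 1), t (i + 1 + 1 + 1)}) := by
  have hside := E.inducedDrawing_side_subset t
  refine Subset.antisymm ?_ (union_subset (hside _) (union_subset (hside _) (hside _)))
  have hsides : E.inducedDrawing (range t) ⊆ ⋃ k, E.inducedDrawing {t k, t (k + 1)} := by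
    rintro z ⟨_, ⟨k, rfl⟩, _, ⟨l, rfl⟩, h, hz⟩
    refine mem_iUnion.2 ?_
    obtain rfl | rfl | rfl := eq_or_eq_add_one_or_eq_add_two k l
    · exact (h.ne rfl).elim
    · exact ⟨k, E.arc_subset_inducedDrawing h (by simp) (by simp) hz⟩
    · exact ⟨k + 2, E.arc_subset_inducedDrawing h (by simp [add_assoc]) (by simp) hz⟩
  intro z hz
  obtain ⟨k, hk⟩ := mem_iUnion.1 (hsides hz)
  obtain rfl | rfl | rfl := eq_or_eq_add_one_or_eq_add_two i k
  exacts [.inl hk, .inr (.inl hk), .inr (.inr (by simpa [add_assoc] using hk))]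

theorem isCompact_inducedDrawing_range : IsCompact (E.inducedDrawing (range t)) := by
  rw [E.inducedDrawing_range_triangle t 0]
  exact (E.isArc_inducedDrawing_side t 0).isCompact.union
    ((E.isArc_inducedDrawing_side t _).isCompact.union
      (E.isArc_inducedDrawing_side t _).isCompact)

/-- The region of the plane, cut along the triangle `t`, that contains the point `p`. -/
def region (p : ℝ × ℝ) : Set (ℝ × ℝ) := connectedComponentIn (E.inducedDrawing (range t))ᶜ p

variable {t} {p r : ℝ × ℝ}

theorem joinedIn_region_union_side (hr : r ∉ E.inducedDrawing (range t))
    (hp : p ∉ E.inducedDrawing (range t)) (hrp : p ∉ E.region t r) (i : Fin 3) :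
    JoinedIn (E.region t r ∪ E.inducedDrawing {t i, t (i + 1)} \ {E.pos (t (i + 1))}) r
      (E.pos (t i)) := by
  have hside := E.isArc_inducedDrawing_side t
  have hlogs := (hside (i + 1)).hasContinuousLogs.union (hside (i + 1 + 1)).hasContinuousLogs
    (hside _).isCompact.isClosed (hside _).isCompact.isClosed
    (E.inducedDrawing_side_inter_side t (i + 1))
  unfold region at hrp ⊢
  rw [E.inducedDrawing_range_triangle t i] at hr hp hrp ⊢
  exact (hside i).joinedIn_connectedComponentIn_compl_union hlogs
    ((hside _).isCompact.union (hside _).isCompact)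
    (.inl (hside (i + 1)).joinedIn.source_mem) hr hp hrp

theorem region_eq_of_mem_region (h : p ∈ E.region t r) : E.region t r = E.region t p :=
  connectedComponentIn_eq h

section Fragment

variable {C : Set V}

theorem pos_notMem_of_isFragment (hC : IsFragment G (range t) C) (hc : c ∈ C) :
    E.pos c ∉ E.inducedDrawing (range t) := fun h =>
  hC.disjoint.notMem_of_mem_left hc (E.mem_of_pos_mem_inducedDrawing h)

theorem region_eq_of_isFragment (hC : IsFragment G (range t) C) (hu : u ∈ C) (hv : v ∈ C) :
    E.region t (E.pos u) = E.region t (E.pos v) :=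
  connectedComponentIn_eq_of_joinedIn <|
    E.joinedIn_of_inducedDrawing_subset hC.connected.preconnected
      (E.disjoint_inducedDrawing hC.disjoint).subset_compl_right hu hv
      (E.pos_notMem_of_isFragment hC hu)

theorem inducedDrawing_insert_diff_subset_region (hC : IsFragment G (range t) C) (hc : c ∈ C)
    (i : Fin 3) : E.inducedDrawing (insert (t i) C) \ {E.pos (t i)} ⊆ E.region t (E.pos c) := by
  have hinter := hC.insert_inter_subset_singleton i Subset.rfl
  have hsub : E.inducedDrawing (insert (t i) C) \ {E.pos (t i)} ⊆
      (E.inducedDrawing (range t))ᶜ := fun z hz hzK =>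
    hz.2 (image_singleton ▸ image_mono hinter
      (E.inducedDrawing_inter_subset (subsingleton_singleton.anti hinter) ⟨hz.1, hzK⟩))
  intro z hz
  have hjoin := (E.joinedIn_inducedDrawing_insert_diff hC.connected.preconnected
    (fun h => hC.ne_triangle h i rfl) hc hz.1 hz.2).mono hsub
  rw [region, ← connectedComponentIn_eq_of_joinedIn hjoin]
  exact mem_connectedComponentIn hjoin.source_mem

theorem disjoint_inducedDrawing_insert_region_union_side (hC : IsFragment G (range t) C)
    (hc : c ∈ C) (hr : E.region t r ≠ E.region t (E.pos c)) {i k : Fin 3} (hik : i ≠ k) :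
    Disjoint (E.inducedDrawing (insert (t i) C))
      (E.region t r ∪ E.inducedDrawing {t k, t (k + 1)} \ {E.pos (t (k + 1))}) := by
  refine disjoint_left.2 fun z hz => ?_
  rintro (hzr | ⟨hzk, hz_ne⟩)
  · by_cases hzi : z = E.pos (t i)
    · refine connectedComponentIn_subset _ _ hzr (hzi ▸ E.inducedDrawing_side_subset t i ?_)
      exact (E.isArc_inducedDrawing_side t i).joinedIn.source_mem
    · exact hr ((E.region_eq_of_mem_region hzr).trans (E.region_eq_of_mem_region
        (E.inducedDrawing_insert_diff_subset_region hC hc i ⟨hz, hzi⟩)).symm)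
  · have hinter := hC.insert_inter_subset_singleton i
      (pair_subset (mem_range_self k) (mem_range_self (k + 1)))
    obtain ⟨w, ⟨hw, rfl | rfl⟩, rfl⟩ :=
      E.inducedDrawing_inter_subset (subsingleton_singleton.anti hinter) ⟨hz, hzk⟩
    exacts [hik (hC.triangle_mem_insert_iff.1 hw).symm, hz_ne rfl]

end Fragment

section TwoFragments

variable {C : Fin 2 → Set V} (hC : ∀ j, IsFragment G (range t) (C j))
  (hdisj : Pairwise fun j k => Disjoint (C j) (C k)) (hadj : ∀ i j, ∃ x ∈ C j, G.Adj (t i) x)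
include hC hdisj hadj

/-- Otherwise the two fragments, contracted to points, would form a plane drawing of `K₅` together
with the triangle and an arc joining them inside their common region. -/
theorem region_ne_of_isFragment {n : Fin 2 → V} (hn : ∀ j, n j ∈ C j) :
    E.region t (E.pos (n 0)) ≠ E.region t (E.pos (n 1)) := by
  intro heq
  have hnK (j : Fin 2) := E.pos_notMem_of_isFragment (hC j) (hn j)
  have hn_inj : Function.Injective n := fun j k h => by
    by_contra hjk
    exact (hdisj hjk).ne_of_mem (hn j) (hn k) h
  have hjoin := joinedIn_connectedComponentIn_compl (E.isCompact_inducedDrawing_range t).isClosed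
    (hnK 0) (heq.symm.subset (mem_connectedComponentIn (hnK 1)))
  refine not_planar_K5 (P := E.pos ∘ t) (Q := E.pos ∘ n)
    (E.pos_inj.comp t.injective_of_top_hom) (E.pos_inj.comp hn_inj)
    (fun i j => E.pos_inj.ne ((hC j).ne_triangle (hn j) i).symm)
    (fun i => (E.isArc_inducedDrawing_side t i).joinedIn)
    (fun i j => E.joinedIn_inducedDrawing_insert (hC j).connected.preconnected (hn j) (hadj i j))
    hjoin ?_ ?_ ?_
  · intro i j k hki hki'
    refine E.disjoint_inducedDrawing (disjoint_left.2 ?_)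
    rintro _ (rfl | rfl) hmem
    exacts [hki ((hC j).triangle_mem_insert_iff.1 hmem).symm,
      hki' ((hC j).triangle_mem_insert_iff.1 hmem).symm]
  · intro i
    exact (disjoint_compl_right.mono_left (E.inducedDrawing_side_subset t i)).mono_right
      (connectedComponentIn_subset _ _)
  · intro i j k m hik hjm
    exact E.disjoint_inducedDrawing
      ((hC j).disjoint_insert_insert_triangle (hC m) (hdisj hjm) hik)

/-- Otherwise the two fragments and a point `r` of a third region, all three joined to every vertex
of the triangle, would form a plane drawing of `K₃,₃`. -/
theorem region_eq_or_region_eq {n : Fin 2 → V} (hn : ∀ j, n j ∈ C j)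
    (hr : r ∉ E.inducedDrawing (range t)) : ∃ j, E.region t r = E.region t (E.pos (n j)) := by
  by_contra! hne
  have hn01 : E.pos (n 0) ≠ E.pos (n 1) :=
    ne_of_apply_ne (E.region t) (E.region_ne_of_isFragment hC hdisj hadj hn)
  have hnr (j : Fin 2) : E.pos (n j) ≠ r := (ne_of_apply_ne (E.region t) (hne j)).symm
  have hnt (i : Fin 3) (j : Fin 2) : E.pos (t i) ≠ E.pos (n j) :=
    E.pos_inj.ne ((hC j).ne_triangle (hn j) i).symm
  have htr (i : Fin 3) : E.pos (t i) ≠ r := ne_of_mem_of_not_mem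
    (E.inducedDrawing_side_subset t i (E.isArc_inducedDrawing_side t i).joinedIn.source_mem) hr
  have hstar (i : Fin 3) (j : Fin 2) := E.joinedIn_inducedDrawing_insert
    (hC j).connected.preconnected (hn j) (hadj i j)
  have hray (i : Fin 3) := (E.joinedIn_region_union_side hr
    (E.pos_notMem_of_isFragment (hC 0) (hn 0)) (fun h => hne 0 (E.region_eq_of_mem_region h))
    i).symm
  have hstar_ray (i k : Fin 3) (j : Fin 2) (hik : i ≠ k) :=
    E.disjoint_inducedDrawing_insert_region_union_side (hC j) (hn j) (hne j) hik
  refine not_planar_K33 (P := E.pos ∘ t) (Q := ![E.pos (n 0), E.pos (n 1), r])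
    (S := fun i => ![E.inducedDrawing (insert (t i) (C 0)), E.inducedDrawing (insert (t i) (C 1)),
      E.region t r ∪ E.inducedDrawing {t i, t (i + 1)} \ {E.pos (t (i + 1))}])
    (E.pos_inj.comp t.injective_of_top_hom) (List.nodup_ofFn.1 (by simp [hn01, hnr])) ?_ ?_ ?_
  · intro i
    simp [Fin.forall_fin_succ, hnt, htr]
  · intro i
    simp only [Fin.forall_fin_succ]
    exact ⟨hstar i 0, hstar i 1, hray i, nofun⟩
  · intro i j k m hik hjm
    fin_cases j <;> fin_cases m <;> try exact absurd hjm (by decide)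
    · exact E.disjoint_inducedDrawing
        ((hC 0).disjoint_insert_insert_triangle (hC 1) (hdisj (by decide)) hik)
    · exact hstar_ray i k 0 hik
    · exact hstar_ray i k 1 hik

theorem isBounded_region_iff {n : Fin 2 → V} (hn : ∀ j, n j ∈ C j) :
    Bornology.IsBounded (E.region t (E.pos (n 0))) ↔
      ¬ Bornology.IsBounded (E.region t (E.pos (n 1))) := by
  have hK := (E.isCompact_inducedDrawing_range t).isBounded
  constructor
  · intro h0 h1
    obtain ⟨r, hr, hr_unbounded⟩ := exists_not_isBounded_connectedComponentIn_compl
      (by simp; norm_num) hK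
    obtain ⟨j, hj⟩ := E.region_eq_or_region_eq hC hdisj hadj hn hr
    rw [region] at hj
    rw [hj] at hr_unbounded
    fin_cases j
    exacts [hr_unbounded h0, hr_unbounded h1]
  · intro h1
    by_contra h0
    exact E.region_ne_of_isFragment hC hdisj hadj hn
      (connectedComponentIn_compl_eq_of_not_isBounded (by simp; norm_num) hK h0 h1)

theorem exists_isBounded_region :
    ∃ j k, (∀ x ∈ C j, Bornology.IsBounded (E.region t (E.pos x))) ∧
      ∀ x ∈ C k, ¬ Bornology.IsBounded (E.region t (E.pos x)) := by
  have hnonempty (j : Fin 2) : ∃ x, x ∈ C j := nonempty_subtype.1 (hC j).connected.nonempty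
  choose n hn using hnonempty
  have hiff := E.isBounded_region_iff hC hdisj hadj hn
  have hconst {j : Fin 2} {x : V} (hx : x ∈ C j) :
      E.region t (E.pos x) = E.region t (E.pos (n j)) := E.region_eq_of_isFragment (hC j) hx (hn j)
  by_cases h1 : Bornology.IsBounded (E.region t (E.pos (n 1)))
  · exact ⟨1, 0, fun x hx => hconst hx ▸ h1, fun x hx => hconst hx ▸ (hiff.not_left.2 h1)⟩
  · exact ⟨0, 1, fun x hx => hconst hx ▸ hiff.2 h1, fun x hx => hconst hx ▸ h1⟩

end TwoFragments

end Triangle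

end PlaneEmbedding

/-! ### Neighbours of a separating triangle -/

section SeparatingTriangle

variable {V : Type u} {G : SimpleGraph V}

section Hom

variable {t : (⊤ : SimpleGraph (Fin 3)) →g G}

theorem compl_range_triangle : (range t)ᶜ = {v | v ≠ t 0 ∧ v ≠ t 1 ∧ v ≠ t 2} := by
  ext v
  simp [Fin.forall_fin_succ, eq_comm]

theorem compl_range_triangle_diff_singleton (i : Fin 3) :
    (range t \ {t i})ᶜ = {v | v ≠ t (i + 1) ∧ v ≠ t (i + 2)} := by
  have hne (k : Fin 3) (hk : k ≠ i) : t k ≠ t i := t.injective_of_top_hom.ne hk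
  suffices range t \ {t i} = {t (i + 1), t (i + 2)} by
    rw [this]
    ext v
    simp
  ext v
  constructor
  · rintro ⟨⟨k, rfl⟩, hk⟩
    obtain rfl | rfl | rfl := eq_or_eq_add_one_or_eq_add_two i k
    exacts [(hk rfl).elim, .inl rfl, .inr rfl]
  · rintro (rfl | rfl)
    exacts [⟨mem_range_self _, hne _ (by simp)⟩, ⟨mem_range_self _, hne _ (by simp)⟩]

variable (hconn : ∀ u v, (G.induce {w | w ≠ u ∧ w ≠ v}).Preconnected)
include hconn

theorem exists_isFragment_triangle (hsep : ¬ (G.induce (range t)ᶜ).Preconnected) :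
    ∃ C : Fin 2 → Set V, (∀ j, IsFragment G (range t) (C j)) ∧
      (Pairwise fun j k => Disjoint (C j) (C k)) ∧ ∀ i j, ∃ x ∈ C j, G.Adj (t i) x := by
  obtain ⟨C, hC, hdisj⟩ := IsFragment.exists_disjoint hsep
  refine ⟨C, hC, hdisj, fun i j => ?_⟩
  obtain ⟨k, hkj⟩ := exists_ne j
  exact (hC j).exists_adj (hC k) (hdisj hkj.symm)
    (compl_range_triangle_diff_singleton (t := t) i ▸ hconn _ _)

theorem existsUnique_adj_and_injective_or_forall_eq {C : Fin 2 → Set V}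
    (hC : ∀ j, IsFragment G (range t) (C j)) (hdisj : Pairwise fun j k => Disjoint (C j) (C k))
    (hadj : ∀ i j, ∃ x ∈ C j, G.Adj (t i) x) (hdeg : ∀ i, (G.neighborSet (t i)).encard ≤ 4)
    {D : Set V} (hDT : D ⊆ (range t)ᶜ) {j k : Fin 2} (hj : C j ⊆ D) (hk : Disjoint (C k) D) :
    (∀ i, ∃! x, x ∈ D ∧ G.Adj (t i) x) ∧
      ∀ y : Fin 3 → V, (∀ i, y i ∈ D ∧ G.Adj (t i) (y i)) →
        Function.Injective y ∨ ∀ i l, y i = y l := by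
  choose n hnC hn using hadj
  have heq (i : Fin 3) (x : V) (hxD : x ∈ D) (hx : G.Adj (t i) x) : x = n i j := by
    have hnbr := (IsFragment.neighborSet_triangle hC hdisj (hdeg i) (hnC i) (hn i)).2.subset hx
    have hxk : x ≠ n i k := (hk.ne_of_mem (hnC i k) hxD).symm
    have hjk : j ≠ k := by
      rintro rfl
      exact hk.notMem_of_mem_left (hnC i j) (hj (hnC i j))
    rcases hnbr with rfl | rfl | rfl | rfl
    · exact (hDT hxD (mem_range_self _)).elim
    · exact (hDT hxD (mem_range_self _)).elim
    · fin_cases j <;> fin_cases k <;> simp_all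
    · fin_cases j <;> fin_cases k <;> simp_all
  refine ⟨fun i => ⟨n i j, ⟨hj (hnC i j), hn i j⟩, fun x hx => heq i x hx.1 hx.2⟩,
    fun y hy => ?_⟩
  obtain rfl : y = fun i => n i j := funext fun i => heq i _ (hy i).1 (hy i).2
  exact (hC j).injective_or_forall_eq hconn (fun i => hnC i j) fun i x hx => heq i x (hj hx)

end Hom

variable (E : PlaneEmbedding G)

section Regions

variable {t : (⊤ : SimpleGraph (Fin 3)) →g G} (h01 : G.Adj (t 0) (t 1)) (h12 : G.Adj (t 1) (t 2))
  (h02 : G.Adj (t 0) (t 2))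

theorem triangleDrawing_eq_inducedDrawing :
    triangleDrawing E h01 h12 h02 = E.inducedDrawing (range t) := by
  have hside : E.inducedDrawing {t (0 + 1 + 1), t (0 + 1 + 1 + 1)} = E.arc h02 :=
    (E.inducedDrawing_pair h02.symm).trans (E.arc_symm h02)
  rw [E.inducedDrawing_range_triangle t 0, hside]
  exact (union_assoc _ _ _).trans (congrArg₂ _ (E.inducedDrawing_pair h01).symm
    (congrArg₂ _ (E.inducedDrawing_pair h12).symm rfl))

theorem insideTriangle_eq : insideTriangle E h01 h12 h02 =
    (range t)ᶜ ∩ {v | Bornology.IsBounded (E.region t (E.pos v))} := by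
  ext v
  simp only [insideTriangle, triangleDrawing_eq_inducedDrawing, compl_range_triangle, mem_inter_iff,
    mem_ofPred_eq, and_assoc, PlaneEmbedding.region]

theorem outsideTriangle_eq : outsideTriangle E h01 h12 h02 =
    (range t)ᶜ ∩ {v | ¬ Bornology.IsBounded (E.region t (E.pos v))} := by
  ext v
  simp only [outsideTriangle, triangleDrawing_eq_inducedDrawing, compl_range_triangle,
    mem_inter_iff, mem_ofPred_eq, and_assoc, PlaneEmbedding.region]

theorem neighbors_separating_triangle
    (hconn : ∀ u v, (G.induce {w | w ≠ u ∧ w ≠ v}).Preconnected)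
    (hdeg : ∀ i, (G.neighborSet (t i)).encard ≤ 4) (hsep : ¬ (G.induce (range t)ᶜ).Preconnected) :
    (∀ i, (G.neighborSet (t i)).ncard = 4) ∧
      ∀ D ∈ ({insideTriangle E h01 h12 h02, outsideTriangle E h01 h12 h02} : Set (Set V)),
        (∀ i, ∃! x, x ∈ D ∧ G.Adj (t i) x) ∧
          ∀ y : Fin 3 → V, (∀ i, y i ∈ D ∧ G.Adj (t i) (y i)) →
            Function.Injective y ∨ ∀ i k, y i = y k := by
  obtain ⟨C, hC, hdisj, hadj⟩ := exists_isFragment_triangle hconn hsep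
  obtain ⟨j, k, hj, hk⟩ := E.exists_isBounded_region hC hdisj hadj
  have hcompl (m : Fin 2) : C m ⊆ (range t)ᶜ := (hC m).disjoint.subset_compl_right
  refine ⟨fun i => ?_, ?_⟩
  · choose n hnC hn using hadj i
    rw [ncard, (IsFragment.neighborSet_triangle hC hdisj (hdeg i) hnC hn).1, ENat.toNat_ofNat]
  rw [insideTriangle_eq, outsideTriangle_eq]
  rintro _ (rfl | rfl)
  · exact existsUnique_adj_and_injective_or_forall_eq hconn hC hdisj hadj hdeg inter_subset_left
      (subset_inter (hcompl j) hj) (disjoint_left.2 fun x hx hxD => hk x hx hxD.2)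
  · exact existsUnique_adj_and_injective_or_forall_eq hconn hC hdisj hadj hdeg inter_subset_left
      (subset_inter (hcompl k) hk) (disjoint_left.2 fun x hx hxD => hxD.2 (hj x hx))

end Regions

variable {a b c : V} (hab : G.Adj a b) (hbc : G.Adj b c) (hac : G.Adj a c)

/-- The triangle `a b c` as a graph homomorphism from the complete graph on `Fin 3`. -/
def triangleHom : (⊤ : SimpleGraph (Fin 3)) →g G where
  toFun := ![a, b, c]
  map_rel' {i j} hij := by fin_cases i <;> fin_cases j <;> simp_all [G.adj_comm]

theorem forall_triangleHom_iff {p : V → Prop} :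
    (∀ i, p (triangleHom hab hbc hac i)) ↔ ∀ v ∈ ({a, b, c} : Set V), p v := by
  simp [Fin.forall_fin_succ, triangleHom]

theorem ne_or_eq_of_triangleHom {D : Set V}
    (h : ∀ y : Fin 3 → V, (∀ i, y i ∈ D ∧ G.Adj (triangleHom hab hbc hac i) (y i)) →
      Function.Injective y ∨ ∀ i k, y i = y k) (x y z : V)
    (hx : x ∈ D) (hax : G.Adj a x) (hy : y ∈ D) (hby : G.Adj b y) (hz : z ∈ D) (hcz : G.Adj c z) :
    (x ≠ y ∧ y ≠ z ∧ x ≠ z) ∨ (x = y ∧ y = z) := by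
  have hadj (i : Fin 3) : ![x, y, z] i ∈ D ∧ G.Adj (triangleHom hab hbc hac i) (![x, y, z] i) := by
    fin_cases i
    exacts [⟨hx, hax⟩, ⟨hy, hby⟩, ⟨hz, hcz⟩]
  rcases h ![x, y, z] hadj with hinj | heq
  · exact .inl ⟨hinj.ne (a₁ := 0) (a₂ := 1) (by decide), hinj.ne (a₁ := 1) (a₂ := 2) (by decide),
      hinj.ne (a₁ := 0) (a₂ := 2) (by decide)⟩
  · exact .inr ⟨heq 0 1, heq 1 2⟩

end SeparatingTriangle

theorem sep_triangle_neighbor_structure_general {V : Type u} {G : SimpleGraph V}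
    (E : PlaneEmbedding G) {a b c : V} (hab : G.Adj a b) (hbc : G.Adj b c) (hac : G.Adj a c)
    (hconn : ∀ u v, (G.induce {w | w ≠ u ∧ w ≠ v}).Preconnected)
    (hdeg : ∀ v ∈ ({a, b, c} : Set V), (G.neighborSet v).encard ≤ 4)
    (hsep : ¬ (G.induce {v | v ≠ a ∧ v ≠ b ∧ v ≠ c}).Preconnected) :
    (∀ v ∈ ({a, b, c} : Set V), (G.neighborSet v).ncard = 4) ∧
    (∀ v ∈ ({a, b, c} : Set V),
      (∃! x : V, x ∈ insideTriangle E hab hbc hac ∧ G.Adj v x) ∧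
      (∃! x : V, x ∈ outsideTriangle E hab hbc hac ∧ G.Adj v x)) ∧
    (∀ ain bin cin : V,
      ain ∈ insideTriangle E hab hbc hac → G.Adj a ain →
      bin ∈ insideTriangle E hab hbc hac → G.Adj b bin →
      cin ∈ insideTriangle E hab hbc hac → G.Adj c cin →
      ((ain ≠ bin ∧ bin ≠ cin ∧ ain ≠ cin) ∨ (ain = bin ∧ bin = cin))) ∧
    (∀ aout bout cout : V,
      aout ∈ outsideTriangle E hab hbc hac → G.Adj a aout →
      bout ∈ outsideTriangle E hab hbc hac → G.Adj b bout →
      cout ∈ outsideTriangle E hab hbc hac → G.Adj c cout →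
      ((aout ≠ bout ∧ bout ≠ cout ∧ aout ≠ cout) ∨ (aout = bout ∧ bout = cout))) := by
  rw [← forall_triangleHom_iff hab hbc hac] at hdeg
  obtain ⟨hcard, hsides⟩ := neighbors_separating_triangle E hab hbc hac hconn hdeg
    (compl_range_triangle (t := triangleHom hab hbc hac) ▸ hsep)
  have hin := hsides _ (.inl rfl)
  have hout := hsides _ (.inr rfl)
  rw [← forall_triangleHom_iff hab hbc hac, ← forall_triangleHom_iff hab hbc hac]
  exact ⟨hcard, fun i => ⟨hin.1 i, hout.1 i⟩, ne_or_eq_of_triangleHom hab hbc hac hin.2,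
    ne_or_eq_of_triangleHom hab hbc hac hout.2⟩

theorem not_preconnected_of_isSepTriangle {V : Type u} {G : SimpleGraph V} {a b c : V}
    (hT : G.IsSepTriangle a b c) (hV : 3 < Nat.card V) :
    ¬ (G.induce {v | v ≠ a ∧ v ≠ b ∧ v ≠ c}).Preconnected := by
  intro h
  have hcard : ({a, b, c} : Set V).ncard < (univ : Set V).ncard := by
    rw [ncard_univ]
    have hbc := ncard_insert_le b {c}
    have habc := ncard_insert_le a {b, c}
    rw [ncard_singleton] at hbc
    lia
  obtain ⟨v, -, hv⟩ := exists_mem_notMem_of_ncard_lt_ncard hcard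
  exact hT.2.2.2 ((SimpleGraph.connected_iff _).2 ⟨h, ⟨v, by simpa using hv⟩⟩)

/-- In an embedded triconnected 4-planar graph, for a separating
triangle on `{a, b, c}`: every triangle vertex has degree exactly four and has exactly
one neighbor strictly inside and exactly one neighbor strictly outside the triangle;
moreover the three inside neighbors are pairwise distinct or all equal, and likewise for
the three outside neighbors. -/
theorem sep_triangle_neighbor_structure {V : Type u} (G : SimpleGraph V)
    (h3 : G.IsTriconnected) (hdeg : G.MaxDegreeLE 4) (E : PlaneEmbedding G)
    {a b c : V} (hT : G.IsSepTriangle a b c) :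
    (∀ v ∈ ({a, b, c} : Set V), (G.neighborSet v).ncard = 4) ∧
    (∀ v ∈ ({a, b, c} : Set V),
      (∃! x : V, x ∈ insideTriangle E hT.1 hT.2.1 hT.2.2.1 ∧ G.Adj v x) ∧
      (∃! x : V, x ∈ outsideTriangle E hT.1 hT.2.1 hT.2.2.1 ∧ G.Adj v x)) ∧
    (∀ ain bin cin : V,
      ain ∈ insideTriangle E hT.1 hT.2.1 hT.2.2.1 → G.Adj a ain →
      bin ∈ insideTriangle E hT.1 hT.2.1 hT.2.2.1 → G.Adj b bin →
      cin ∈ insideTriangle E hT.1 hT.2.1 hT.2.2.1 → G.Adj c cin →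
      ((ain ≠ bin ∧ bin ≠ cin ∧ ain ≠ cin) ∨ (ain = bin ∧ bin = cin))) ∧
    (∀ aout bout cout : V,
      aout ∈ outsideTriangle E hT.1 hT.2.1 hT.2.2.1 → G.Adj a aout →
      bout ∈ outsideTriangle E hT.1 hT.2.1 hT.2.2.1 → G.Adj b bout →
      cout ∈ outsideTriangle E hT.1 hT.2.1 hT.2.2.1 → G.Adj c cout →
      ((aout ≠ bout ∧ bout ≠ cout ∧ aout ≠ cout) ∨ (aout = bout ∧ bout = cout))) := by
  have : Finite V := Nat.finite_of_card_ne_zero (Nat.ne_zero_of_lt h3.1)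
  exact sep_triangle_neighbor_structure_general E hT.1 hT.2.1 hT.2.2.1
    (fun u v => (h3.2.2 u v).preconnected)
    (fun v _ => encard_le_coe_iff_finite_ncard_le.2 ⟨toFinite _, hdeg v⟩)
    (not_preconnected_of_isSepTriangle hT h3.1)
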